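/- arXiv:2502.12773 — 4 statements merged into one kernel-verified Lean document; each statement's English description precedes it below -/
import Mathlib

section
/- Let G be a connected bridgeless finite simple cubic graph on n vertices whose flow polynomial F(G,t) has only real roots. Then F(G,t), which has degree n/2 + 1, has 1 as a root of multiplicity exactly 1, and all of its remaining n/2 roots (counted with multiplicity) are greater than or equal to 2. -/
open Polynomial

/-- The flow polynomial of a finite simple graph `G`:
`F(G,t) = Σ_{Z ⊆ E(G)} (−1)^{m−|Z|} t^{|Z|+c(Z)−n}`, where `c(Z)` is the number of
connected components of the spanning subgraph with edge set `Z`. -/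
noncomputable def flowPoly {V : Type} [Fintype V] (G : SimpleGraph V) : Polynomial ℤ :=
  ∑ Z ∈ G.edgeSet.toFinite.toFinset.powerset,
    (-1 : ℤ) ^ (G.edgeSet.toFinite.toFinset.card - Z.card) •
      (X : Polynomial ℤ) ^
        (Z.card + Nat.card (SimpleGraph.fromEdgeSet (↑Z : Set (Sym2 V))).ConnectedComponent
          - Fintype.card V)

/-- The number of edges of `G`. -/
noncomputable def edgeCount {V : Type} [Fintype V] (G : SimpleGraph V) : ℕ :=
  G.edgeSet.toFinite.toFinset.card

namespace FlowAux
open Classical in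
noncomputable def hgr {V : Type} (Z : Finset (Sym2 V)) (S : Finset V) : SimpleGraph V :=
  SimpleGraph.fromEdgeSet {e | e ∈ Z ∨ ∃ a ∈ S, ∃ b ∈ S, e = s(a, b)}

noncomputable def cc {V : Type} (H : SimpleGraph V) : ℕ := Nat.card H.ConnectedComponent

theorem reach_of_adj {V : Type} {H H' : SimpleGraph V}
    (h : ∀ a b, H.Adj a b → H'.Reachable a b) {a b : V} (hr : H.Reachable a b) :
    H'.Reachable a b := by
  obtain ⟨w⟩ := hr
  induction w with
  | nil => exact SimpleGraph.Reachable.refl _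
  | cons hadj _ ih => exact (h _ _ hadj).trans ih

theorem cc_congr {V : Type} {H H' : SimpleGraph V}
    (h : ∀ a b, H.Adj a b → H'.Reachable a b) (h' : ∀ a b, H'.Adj a b → H.Reachable a b) :
    cc H = cc H' := by
  have : H.Reachable = H'.Reachable := by
    funext a b
    exact propext ⟨reach_of_adj h, reach_of_adj h'⟩
  unfold cc SimpleGraph.ConnectedComponent
  rw [this]

/-- Adding an edge between different components. -/
theorem cc_bridge {V : Type} [Finite V] {H H' : SimpleGraph V} {a b : V}
    (hle : H ≤ H') (hab : H'.Adj a b) (hnr : ¬ H.Reachable a b)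
    (hH' : ∀ v w, H'.Adj v w → H.Adj v w ∨ (v = a ∧ w = b) ∨ (v = b ∧ w = a)) :
    cc H = cc H' + 1 := by
  classical
  have key : ∀ v w, H'.Reachable v w → H.Reachable v w ∨ (H.Reachable v a ∧ H.Reachable b w) ∨
      (H.Reachable v b ∧ H.Reachable a w) := by
    intro v w hvw
    obtain ⟨p⟩ := hvw
    induction p with
    | nil => left; exact SimpleGraph.Reachable.refl _
    | @cons x y z hadj _ ih =>
      rcases hH' _ _ hadj with h | ⟨rfl, rfl⟩ | ⟨rfl, rfl⟩
      · have h := h.reachable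
        rcases ih with i | ⟨i, j⟩ | ⟨i, j⟩
        · exact Or.inl (h.trans i)
        · exact Or.inr (Or.inl ⟨h.trans i, j⟩)
        · exact Or.inr (Or.inr ⟨h.trans i, j⟩)
      · rcases ih with i | ⟨i, j⟩ | ⟨i, j⟩
        · exact Or.inr (Or.inl ⟨.refl _, i⟩)
        · exact absurd i.symm hnr
        · exact Or.inl j
      · rcases ih with i | ⟨i, j⟩ | ⟨i, j⟩
        · exact Or.inr (Or.inr ⟨.refl _, i⟩)
        · exact Or.inl j
        · exact absurd i hnr
  let ca := H.connectedComponentMk a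
  let f : {c : H.ConnectedComponent // c ≠ ca} → H'.ConnectedComponent :=
    fun c => c.1.map (SimpleGraph.Hom.ofLE hle)
  have hf : Function.Bijective f := by
    constructor
    · rintro ⟨c, hc⟩ ⟨d, hd⟩ h
      induction c using SimpleGraph.ConnectedComponent.ind with | _ v
      induction d using SimpleGraph.ConnectedComponent.ind with | _ w
      have h1 : H'.Reachable v w := SimpleGraph.ConnectedComponent.exact h
      have hv : ¬ H.Reachable v a := fun h => hc (SimpleGraph.ConnectedComponent.sound h)
      have hw : ¬ H.Reachable w a := fun h => hd (SimpleGraph.ConnectedComponent.sound h)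
      apply Subtype.ext
      apply SimpleGraph.ConnectedComponent.sound
      rcases key v w h1 with h | ⟨h, _⟩ | ⟨_, h⟩
      · exact h
      · exact absurd h hv
      · exact absurd h.symm hw
    · intro d
      induction d using SimpleGraph.ConnectedComponent.ind with | _ v
      by_cases hv : H.Reachable v a
      · refine ⟨⟨H.connectedComponentMk b, fun h => hnr (SimpleGraph.ConnectedComponent.exact h).symm⟩, ?_⟩
        apply SimpleGraph.ConnectedComponent.sound
        exact hab.symm.reachable.trans (hv.symm.mono hle)
      · refine ⟨⟨H.connectedComponentMk v, fun h => hv (SimpleGraph.ConnectedComponent.exact h)⟩, ?_⟩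
        rfl
  unfold cc
  rw [← Nat.card_eq_of_bijective f hf]
  have := Fintype.ofFinite H.ConnectedComponent
  rw [Nat.card_eq_fintype_card, Nat.card_eq_fintype_card, Fintype.card_subtype_compl]
  simp
  have : 0 < Fintype.card H.ConnectedComponent := Fintype.card_pos_iff.2 ⟨ca⟩
  omega

theorem not_reach_of_cut {V : Type} {H : SimpleGraph V} (A : Set V) {a b : V} (ha : a ∈ A)
    (hb : b ∉ A) (h : ∀ v w, H.Adj v w → v ∈ A → w ∈ A) : ¬ H.Reachable a b := by
  rintro ⟨p⟩
  induction p with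
  | nil => exact hb ha
  | cons hadj _ ih => exact ih (h _ _ hadj ha) hb

theorem hgr_adj {V : Type} {Z : Finset (Sym2 V)} {S : Finset V} {a b : V} :
    (hgr Z S).Adj a b ↔ (s(a,b) ∈ Z ∨ (a ∈ S ∧ b ∈ S)) ∧ a ≠ b := by
  unfold hgr
  rw [SimpleGraph.fromEdgeSet_adj]
  constructor
  · rintro ⟨h | ⟨x, hx, y, hy, h⟩, hne⟩
    · exact ⟨Or.inl h, hne⟩
    · refine ⟨Or.inr ?_, hne⟩
      rcases Sym2.eq_iff.1 h with ⟨rfl, rfl⟩ | ⟨rfl, rfl⟩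
      · exact ⟨hx, hy⟩
      · exact ⟨hy, hx⟩
  · rintro ⟨h | ⟨h, h'⟩, hne⟩
    · exact ⟨Or.inl h, hne⟩
    · exact ⟨Or.inr ⟨a, h, b, h', rfl⟩, hne⟩

theorem hgr_reach {V : Type} {Z : Finset (Sym2 V)} {S : Finset V} {a b : V}
    (h : s(a,b) ∈ Z ∨ (a ∈ S ∧ b ∈ S)) : (hgr Z S).Reachable a b := by
  by_cases hab : a = b
  · subst hab; exact .refl _
  · exact (hgr_adj.2 ⟨h, hab⟩).reachable

open Classical in
theorem cc_contract {V : Type} (Z : Finset (Sym2 V)) (S : Finset V) {x u : V} (hx : x ∈ S) :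
    cc (hgr (insert s(x,u) Z) S) = cc (hgr Z (insert u S)) := by
  apply cc_congr
  · intro a b h
    obtain ⟨h | h, hne⟩ := hgr_adj.1 h
    · rcases Finset.mem_insert.1 h with h | h
      · apply hgr_reach
        right
        rcases Sym2.eq_iff.1 h with ⟨rfl, rfl⟩ | ⟨rfl, rfl⟩ <;> simp [hx]
      · exact hgr_reach (Or.inl h)
    · exact hgr_reach (Or.inr (by simp [h.1, h.2]))
  · have hu : ∀ a ∈ S, (hgr (insert s(x,u) Z) S).Reachable a u := by
      intro a ha
      exact (hgr_reach (Or.inr ⟨ha, hx⟩)).trans (hgr_reach (Or.inl (by simp)))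
    intro a b h
    obtain ⟨h | ⟨h, h'⟩, hne⟩ := hgr_adj.1 h
    · exact hgr_reach (Or.inl (by simp [h]))
    · rcases Finset.mem_insert.1 h with h1 | h1
      · rcases Finset.mem_insert.1 h' with h2 | h2
        · exact absurd (h1.trans h2.symm) hne
        · rw [h1]; exact (hu _ h2).symm
      · rcases Finset.mem_insert.1 h' with h2 | h2
        · rw [h2]; exact hu _ h1
        · exact hgr_reach (Or.inr ⟨h1, h2⟩)

open Classical in
theorem cc_loop {V : Type} (Z : Finset (Sym2 V)) (S : Finset V) {x u : V} (hx : x ∈ S)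
    (hu : u ∈ S) : cc (hgr (insert s(x,u) Z) S) = cc (hgr Z S) := by
  rw [cc_contract Z S hx, Finset.insert_eq_of_mem hu]

/-- The shifted flow polynomial of the graph with edge set `E` after identifying `S`. -/
noncomputable def P {V : Type} (S : Finset V) (E : Finset (Sym2 V)) : ℝ[X] :=
  ∑ Z ∈ E.powerset, (-1) ^ (E.card + Z.card) * X ^ (Z.card + cc (hgr Z S))

open Classical in
theorem P_insert {V : Type} (S : Finset V) (E : Finset (Sym2 V)) (e : Sym2 V) (he : e ∉ E) :
    P S (insert e E) = - P S E +
      ∑ Z ∈ E.powerset, (-1) ^ (E.card + Z.card) * X ^ (Z.card + 1 + cc (hgr (insert e Z) S)) := by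
  unfold P
  rw [Finset.sum_powerset_insert he, ← Finset.sum_neg_distrib]
  congr 1
  · apply Finset.sum_congr rfl
    intro Z hZ
    rw [Finset.card_insert_of_notMem he]
    ring
  · apply Finset.sum_congr rfl
    intro Z hZ
    have : e ∉ Z := fun h => he (Finset.mem_powerset.1 hZ h)
    rw [Finset.card_insert_of_notMem he, Finset.card_insert_of_notMem this]
    ring

open Classical in
theorem P_contract {V : Type} (S : Finset V) (E : Finset (Sym2 V)) {x u : V} (hx : x ∈ S)
    (he : s(x,u) ∉ E) :
    P S (insert s(x,u) E) = X * P (insert u S) E - P S E := by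
  rw [P_insert _ _ _ he]
  have : X * P (insert u S) E = ∑ Z ∈ E.powerset, (-1) ^ (E.card + Z.card) *
      X ^ (Z.card + 1 + cc (hgr (insert s(x,u) Z) S)) := by
    unfold P
    rw [Finset.mul_sum]
    apply Finset.sum_congr rfl
    intro Z hZ
    rw [cc_contract Z S hx]
    ring
  rw [this]; ring

open Classical in
theorem P_loop {V : Type} (S : Finset V) (E : Finset (Sym2 V)) {x u : V} (hx : x ∈ S)
    (hu : u ∈ S) (he : s(x,u) ∉ E) :
    P S (insert s(x,u) E) = (X - 1) * P S E := by
  rw [P_contract S E hx he, Finset.insert_eq_of_mem hu]; ring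

/-- edges leaving `A` -/
noncomputable def bd {V : Type} (E : Finset (Sym2 V)) (A : Set V) : Finset (Sym2 V) :=
  open Classical in E.filter (fun e => ∃ a ∈ A, ∃ b ∉ A, e = s(a,b))

theorem P_dead {V : Type} [Finite V] (S : Finset V) (E : Finset (Sym2 V)) (A : Set V)
    (hA : ∀ a ∈ A, a ∉ S) (h1 : (bd E A).card = 1) : P S E = 0 := by
  classical
  obtain ⟨e, he⟩ := Finset.card_eq_one.1 h1
  have hm : e ∈ bd E A := by simp [he]
  have hm2 := hm
  unfold bd at hm2
  obtain ⟨heE, a, ha, b, hb, rfl⟩ := Finset.mem_filter.1 hm2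
  have hE : insert s(a,b) (E.erase s(a,b)) = E := Finset.insert_erase heE
  rw [← hE, P_insert _ _ _ (Finset.notMem_erase _ _)]
  unfold P
  rw [neg_add_eq_zero]
  apply Finset.sum_congr rfl
  intro Z hZ
  have hZ' := Finset.mem_powerset.1 hZ
  have hne : a ≠ b := fun h => hb (h ▸ ha)
  have : cc (hgr Z S) = cc (hgr (insert s(a,b) Z) S) + 1 := by
    apply cc_bridge (a := a) (b := b)
    · intro v w h
      obtain ⟨h | h, hne⟩ := hgr_adj.1 h
      · exact hgr_adj.2 ⟨Or.inl (by simp [h]), hne⟩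
      · exact hgr_adj.2 ⟨Or.inr h, hne⟩
    · exact hgr_adj.2 ⟨Or.inl (by simp), hne⟩
    · apply not_reach_of_cut A ha hb
      intro v w h hv
      by_contra hw
      obtain ⟨h | h, hne⟩ := hgr_adj.1 h
      · have h2 := hZ' h
        have : s(v,w) ∈ bd E A := by
          unfold bd
          exact Finset.mem_filter.2 ⟨Finset.mem_of_mem_erase h2, v, hv, w, hw, rfl⟩
        rw [he, Finset.mem_singleton] at this
        rw [this] at h2
        simp at h2
      · exact hA v hv h.1
    · intro v w h
      obtain ⟨h | h, hne⟩ := hgr_adj.1 h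
      · rcases Finset.mem_insert.1 h with h | h
        · right
          exact Sym2.eq_iff.1 h
        · exact Or.inl (hgr_adj.2 ⟨Or.inl h, hne⟩)
      · exact Or.inl (hgr_adj.2 ⟨Or.inr h, hne⟩)
  rw [this]
  ring

theorem cc_bound {V : Type} [Fintype V] (Z : Finset (Sym2 V)) (x : V) :
    Fintype.card V ≤ Z.card + cc (hgr Z {x}) := by
  classical
  induction Z using Finset.induction_on with
  | empty =>
    have : hgr (∅ : Finset (Sym2 V)) {x} = ⊥ := by
      ext a b
      rw [hgr_adj]
      simp
      rintro rfl rfl; rfl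
    rw [this]
    unfold cc
    have hi : Function.Injective (fun v => (⊥ : SimpleGraph V).connectedComponentMk v) := by
      intro v w h
      exact SimpleGraph.reachable_bot.1 (SimpleGraph.ConnectedComponent.exact h)
    have := Nat.card_le_card_of_injective _ hi
    simpa using this
  | insert e Z he ih =>
    rw [Finset.card_insert_of_notMem he]
    induction e using Sym2.ind with | _ a b
    by_cases hr : (hgr Z {x}).Reachable a b
    · have : cc (hgr Z {x}) = cc (hgr (insert s(a,b) Z) {x}) := by
        apply cc_congr
        · intro v w h
          obtain ⟨h | h, hne⟩ := hgr_adj.1 h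
          · exact hgr_reach (Or.inl (by simp [h]))
          · exact hgr_reach (Or.inr h)
        · intro v w h
          obtain ⟨h | h, hne⟩ := hgr_adj.1 h
          · rcases Finset.mem_insert.1 h with h | h
            · rcases Sym2.eq_iff.1 h with ⟨rfl, rfl⟩ | ⟨rfl, rfl⟩
              · exact hr
              · exact hr.symm
            · exact hgr_reach (Or.inl h)
          · exact hgr_reach (Or.inr h)
      omega
    · have : cc (hgr Z {x}) = cc (hgr (insert s(a,b) Z) {x}) + 1 := by
        apply cc_bridge (a := a) (b := b)
        · intro v w h
          obtain ⟨h | h, hne⟩ := hgr_adj.1 h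
          · exact hgr_adj.2 ⟨Or.inl (by simp [h]), hne⟩
          · exact hgr_adj.2 ⟨Or.inr h, hne⟩
        · refine hgr_adj.2 ⟨Or.inl (by simp), ?_⟩
          rintro rfl; exact hr (.refl _)
        · exact hr
        · intro v w h
          obtain ⟨h | h, hne⟩ := hgr_adj.1 h
          · rcases Finset.mem_insert.1 h with h | h
            · right
              exact Sym2.eq_iff.1 h
            · exact Or.inl (hgr_adj.2 ⟨Or.inl h, hne⟩)
          · exact Or.inl (hgr_adj.2 ⟨Or.inr h, hne⟩)
      omega

theorem P_base {V : Type} [Fintype V] [Nonempty V] (S : Finset V) (hS : ∀ v, v ∈ S) :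
    P S ∅ = X := by
  have : cc (hgr (∅ : Finset (Sym2 V)) S) = 1 := by
    unfold cc
    rw [Nat.card_eq_one_iff_unique]
    constructor
    · constructor
      intro c d
      induction c using SimpleGraph.ConnectedComponent.ind with | _ v
      induction d using SimpleGraph.ConnectedComponent.ind with | _ w
      exact SimpleGraph.ConnectedComponent.sound (hgr_reach (Or.inr ⟨hS v, hS w⟩))
    · exact ⟨SimpleGraph.connectedComponentMk _ (Classical.arbitrary V)⟩
  unfold P
  simp [this]

/-- cut-connectivity -/
def Conn {V : Type} (E : Finset (Sym2 V)) (W : Set V) : Prop :=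
  ∀ A B : Set V, A.Nonempty → B.Nonempty → (∀ v, v ∈ A → v ∉ B) →
    (∀ v, v ∈ W ↔ v ∈ A ∨ v ∈ B) → ∃ a ∈ A, ∃ b ∈ B, s(a,b) ∈ E

noncomputable def star {V : Type} (E : Finset (Sym2 V)) (u : V) : Finset (Sym2 V) :=
  open Classical in E.filter (fun e => u ∈ e)

structure Good {V : Type} (S : Finset V) (E : Finset (Sym2 V)) : Prop where
  loopless : ∀ a, s(a,a) ∉ E
  meets : ∀ a b, s(a,b) ∈ E → a ∈ S → b ∉ S
  deg : ∀ u, u ∉ S → (star E u).card ≤ 3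
  cut : ∀ A : Set V, A.Nonempty → (∀ a ∈ A, a ∉ S) → 2 ≤ (bd E A).card
  conn : Conn E {v | v ∉ S}
  nonempty : ∃ v, v ∉ S

theorem mem_star {V : Type} {E : Finset (Sym2 V)} {u : V} {e : Sym2 V} :
    e ∈ star E u ↔ e ∈ E ∧ u ∈ e := by
  classical
  unfold star; rw [Finset.mem_filter]

theorem mem_bd {V : Type} {E : Finset (Sym2 V)} {A : Set V} {e : Sym2 V} :
    e ∈ bd E A ↔ e ∈ E ∧ ∃ a ∈ A, ∃ b ∉ A, e = s(a,b) := by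
  classical
  unfold bd; rw [Finset.mem_filter]

theorem exists_aux {V : Type} [Finite V] {S : Finset V} {E : Finset (Sym2 V)} (hG : Good S E) :
    ∀ k : ℕ, ∀ u x : V, ∀ A B : Set V, A.ncard = k → u ∉ S → x ∈ S → s(x,u) ∈ E →
      A.Nonempty → B.Nonempty → (∀ v, v ∈ A → v ∉ B) →
      (∀ v, (v ∉ S ∧ v ≠ u) ↔ v ∈ A ∨ v ∈ B) → (∀ a ∈ A, ∀ b ∈ B, s(a,b) ∉ E) →
      ∃ u' x' : V, u' ∉ S ∧ x' ∈ S ∧ s(x',u') ∈ E ∧ Conn E {v | v ∉ S ∧ v ≠ u'} := by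
  classical
  intro k
  induction k using Nat.strong_induction_on with
  | _ k ih =>
  intro u x A B hk huS hxS hxu hA hB hdisj hcov hno
  by_cases hex : ∃ u' ∈ A, ∃ x' ∈ S, s(x',u') ∈ E
  · obtain ⟨u', hu'A, x', hx'S, hx'u'⟩ := hex
    have hu'S := ((hcov u').2 (Or.inl hu'A)).1
    have hu'u := ((hcov u').2 (Or.inl hu'A)).2
    by_cases hc : Conn E {v | v ∉ S ∧ v ≠ u'}
    · exact ⟨u', x', hu'S, hx'S, hx'u', hc⟩
    have hsplit : ∃ A' B' : Set V, A'.Nonempty ∧ B'.Nonempty ∧ (∀ v, v ∈ A' → v ∉ B') ∧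
        (∀ v, (v ∉ S ∧ v ≠ u') ↔ v ∈ A' ∨ v ∈ B') ∧ (∀ a ∈ A', ∀ b ∈ B', s(a,b) ∉ E) ∧
        u ∈ B' := by
      unfold Conn at hc
      push Not at hc
      obtain ⟨A', B', hA', hB', hd, hcv, hn⟩ := hc
      rcases (hcv u).1 ⟨huS, hu'u.symm⟩ with h | h
      · refine ⟨B', A', hB', hA', fun v hv hv' => hd v hv' hv, fun v => ?_, ?_, h⟩
        · rw [or_comm]; exact hcv v
        · intro a ha b hb
          rw [Sym2.eq_swap]; exact hn b hb a ha
      · exact ⟨A', B', hA', hB', hd, hcv, hn, h⟩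
    obtain ⟨A', B', hA', hB', hd, hcv, hn, huB'⟩ := hsplit
    have hsub : A' ⊆ A := by
      by_contra hns
      obtain ⟨p0, hp0, hp0A⟩ := Set.not_subset.1 hns
      have hp0u : p0 ≠ u := by rintro rfl; exact hd _ hp0 huB'
      have hp0B : p0 ∈ B := by
        rcases (hcov p0).1 ⟨((hcv p0).2 (Or.inl hp0)).1, hp0u⟩ with h | h
        · exact absurd h hp0A
        · exact h
      obtain ⟨p, hp, q, hq, hpq⟩ := hG.conn (A' ∩ B) {v | v ∉ S ∧ ¬ (v ∈ A' ∧ v ∈ B)}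
        ⟨p0, hp0, hp0B⟩ ⟨u, huS, fun h => hd _ h.1 huB'⟩ (fun v hv h => h.2 hv)
        (fun v => by
          constructor
          · intro h
            by_cases h' : v ∈ A' ∧ v ∈ B
            · exact Or.inl h'
            · exact Or.inr ⟨h, h'⟩
          · rintro (h | h)
            · exact ((hcv v).2 (Or.inl h.1)).1
            · exact h.1)
      by_cases hqu : q = u
      · subst hqu; exact hn p hp.1 q huB' hpq
      rcases (hcov q).1 ⟨hq.1, hqu⟩ with h | h
      · exact hno q h p hp.2 (by rwa [Sym2.eq_swap])
      · have hqu' : q ≠ u' := by rintro rfl; exact hdisj _ hu'A h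
        rcases (hcv q).1 ⟨hq.1, hqu'⟩ with h' | h'
        · exact hq.2 ⟨h', h⟩
        · exact hn p hp.1 q h' hpq
    have hss : A' ⊂ A := by
      refine ⟨hsub, fun h => ?_⟩
      exact ((hcv u').2 (Or.inl (h hu'A))).2 rfl
    have hlt : A'.ncard < k := hk ▸ Set.ncard_lt_ncard hss (Set.toFinite _)
    exact ih _ hlt u' x' A' B' rfl hu'S hx'S hx'u' hA' hB' hd hcv hn
  · exfalso
    push Not at hex
    have hAS : ∀ a ∈ A, a ∉ S := fun a ha => ((hcov a).2 (Or.inl ha)).1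
    have hBS : ∀ a ∈ B, a ∉ S := fun a ha => ((hcov a).2 (Or.inr ha)).1
    have huA : u ∉ A := fun h => ((hcov u).2 (Or.inl h)).2 rfl
    have huB : u ∉ B := fun h => ((hcov u).2 (Or.inr h)).2 rfl
    have h1 : ∃ p ∈ A, s(p,u) ∈ E := by
      obtain ⟨p, hp, q, hq, hpq⟩ := hG.conn A {v | v ∉ S ∧ v ∉ A} hA ⟨u, huS, huA⟩
        (fun v hv h => h.2 hv) (fun v => by
          have := hAS v
          simp only [Set.mem_ofPred_eq]; tauto)
      by_cases hqu : q = u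
      · exact ⟨p, hp, hqu ▸ hpq⟩
      · rcases (hcov q).1 ⟨hq.1, hqu⟩ with h | h
        · exact absurd h hq.2
        · exact absurd hpq (hno p hp q h)
    have h2 : ∃ p ∈ B, s(p,u) ∈ E := by
      obtain ⟨p, hp, q, hq, hpq⟩ := hG.conn B {v | v ∉ S ∧ v ∉ B} hB ⟨u, huS, huB⟩
        (fun v hv h => h.2 hv) (fun v => by
          have := hBS v
          simp only [Set.mem_ofPred_eq]; tauto)
      by_cases hqu : q = u
      · exact ⟨p, hp, hqu ▸ hpq⟩
      · rcases (hcov q).1 ⟨hq.1, hqu⟩ with h | h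
        · exact absurd (by rwa [Sym2.eq_swap]) (hno q h p hp)
        · exact absurd h hq.2
    obtain ⟨p, hp, hpu⟩ := h1
    obtain ⟨p', hp', hpu'⟩ := h2
    have hpp' : p ≠ p' := by rintro rfl; exact hdisj _ hp hp'
    have hpx : p ≠ x := by rintro rfl; exact hAS _ hp hxS
    have hpx' : p' ≠ x := by rintro rfl; exact hBS _ hp' hxS
    have hcong : ∀ a b : V, s(a,u) = s(b,u) → a = b := by
      intro a b h
      rcases Sym2.eq_iff.1 h with h | ⟨h, h'⟩
      · exact h.1
      · exact h.trans h'
    have hT : ({s(p,u), s(p',u), s(x,u)} : Finset (Sym2 V)) = star E u := by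
      apply Finset.eq_of_subset_of_card_le
      · intro e he
        simp only [Finset.mem_insert, Finset.mem_singleton] at he
        rw [mem_star]
        rcases he with rfl | rfl | rfl <;> simp [*]
      · have : ({s(p,u), s(p',u), s(x,u)} : Finset (Sym2 V)).card = 3 := by
          rw [Finset.card_eq_three]
          exact ⟨_, _, _, fun h => hpp' (hcong _ _ h), fun h => hpx (hcong _ _ h),
            fun h => hpx' (hcong _ _ h), rfl⟩
        rw [this]
        exact hG.deg u huS
    have hbd : bd E A ⊆ {s(p,u)} := by
      intro e he
      obtain ⟨heE, a, ha, b, hb, rfl⟩ := mem_bd.1 he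
      have hbS : b ∉ S := fun h => hex a ha b h (by rwa [Sym2.eq_swap])
      have hbu : b = u := by
        by_contra hbu
        rcases (hcov b).1 ⟨hbS, hbu⟩ with h | h
        · exact hb h
        · exact hno a ha b h heE
      subst hbu
      have : s(a,b) ∈ star E b := mem_star.2 ⟨heE, by simp⟩
      rw [← hT] at this
      simp only [Finset.mem_insert, Finset.mem_singleton] at this
      rcases this with h | h | h
      · simp [h]
      · have := hcong _ _ h; subst this; exact absurd hp' (hdisj _ ha)
      · have := hcong _ _ h; subst this; exact absurd hxS (hAS _ ha)
    have h3 := Finset.card_le_card hbd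
    have h4 := hG.cut A hA hAS
    simp at h3
    omega

theorem exists_good {V : Type} [Finite V] {S : Finset V} {E : Finset (Sym2 V)} (hG : Good S E) :
    ∃ u x : V, u ∉ S ∧ x ∈ S ∧ s(x,u) ∈ E ∧ Conn E {v | v ∉ S ∧ v ≠ u} := by
  classical
  have h := hG.cut {v | v ∉ S} hG.nonempty (fun a h => h)
  obtain ⟨e, he⟩ := Finset.card_pos.1 (lt_of_lt_of_le (by norm_num) h)
  obtain ⟨heE, u, hu, x, hx, rfl⟩ := mem_bd.1 he
  have hxS : x ∈ S := by by_contra h; exact hx h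
  have hxu : s(x,u) ∈ E := by rwa [Sym2.eq_swap]
  by_cases hc : Conn E {v | v ∉ S ∧ v ≠ u}
  · exact ⟨u, x, hu, hxS, hxu, hc⟩
  unfold Conn at hc
  push Not at hc
  obtain ⟨A', B', hA', hB', hd, hcv, hn⟩ := hc
  exact exists_aux hG _ u x A' B' rfl hu hxS hxu hA' hB' hd hcv hn

open Classical in
theorem Good.next {V : Type} {S : Finset V} {E E' : Finset (Sym2 V)} (hG : Good S E) {u : V}
    (hc : Conn E {v | v ∉ S ∧ v ≠ u}) (hne : ∃ w, w ∉ S ∧ w ≠ u) (hsub : E' ⊆ E)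
    (h1 : ∀ e ∈ E, e ∉ E' → ∃ x ∈ S, e = s(u,x)) (h2 : ∀ y, s(u,y) ∈ E' → y ∉ S) :
    Good (insert u S) E' := by
  have hkeep : ∀ a b, s(a,b) ∈ E → a ∉ S → a ≠ u → s(a,b) ∈ E' := by
    intro a b hab ha hau
    by_contra h
    obtain ⟨x, hx, he⟩ := h1 _ hab h
    rcases Sym2.eq_iff.1 he with ⟨h, _⟩ | ⟨h, _⟩
    · exact hau h
    · exact ha (h ▸ hx)
  refine ⟨fun a h => hG.loopless a (hsub h), ?_, ?_, ?_, ?_, ?_⟩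
  · intro a b hab ha hb
    rcases Finset.mem_insert.1 ha with ha' | ha'
    · rw [ha'] at hab
      rcases Finset.mem_insert.1 hb with hb' | hb'
      · rw [hb'] at hab; exact hG.loopless _ (hsub hab)
      · exact h2 _ hab hb'
    · rcases Finset.mem_insert.1 hb with hb' | hb'
      · rw [hb', Sym2.eq_swap] at hab; exact h2 _ hab ha'
      · exact hG.meets _ _ (hsub hab) ha' hb'
  · intro v hv
    refine le_trans (Finset.card_le_card ?_) (hG.deg v (fun h => hv (by simp [h])))
    intro e he
    rw [mem_star] at he ⊢
    exact ⟨hsub he.1, he.2⟩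
  · intro A hA hAS
    refine le_trans (hG.cut A hA (fun a ha h => hAS a ha (by simp [h]))) (Finset.card_le_card ?_)
    intro e he
    rw [mem_bd] at he ⊢
    obtain ⟨heE, a, ha, b, hb, rfl⟩ := he
    have := hAS a ha
    simp only [Finset.mem_insert, not_or] at this
    exact ⟨hkeep a b heE this.2 this.1, a, ha, b, hb, rfl⟩
  · intro A B hA hB hd hcov
    have hcov' : ∀ v, v ∈ {v | v ∉ S ∧ v ≠ u} ↔ v ∈ A ∨ v ∈ B := by
      intro v
      rw [← hcov v]
      simp only [Set.mem_ofPred_eq, Finset.mem_insert, not_or]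
      tauto
    obtain ⟨a, ha, b, hb, hab⟩ := hc A B hA hB hd hcov'
    have := (hcov' a).2 (Or.inl ha)
    exact ⟨a, ha, b, hb, hkeep a b hab this.1 this.2⟩
  · obtain ⟨w, hw, hwu⟩ := hne
    exact ⟨w, by simp [hw, hwu]⟩

open Classical in
theorem Good.erase {V : Type} {S : Finset V} {E : Finset (Sym2 V)} {u x : V} (hx : x ∈ S)
    (hG : Good S (insert s(x,u) E))
    (hnd : ∀ A : Set V, (∀ a ∈ A, a ∉ S) → (bd E A).card ≠ 1) : Good S E := by
  have hsub : E ⊆ insert s(x,u) E := Finset.subset_insert _ _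
  refine ⟨fun a h => hG.loopless a (hsub h), fun a b h => hG.meets a b (hsub h), ?_, ?_, ?_,
    hG.nonempty⟩
  · intro v hv
    refine le_trans (Finset.card_le_card ?_) (hG.deg v hv)
    intro e he
    rw [mem_star] at he ⊢
    exact ⟨hsub he.1, he.2⟩
  · intro A hA hAS
    have h1 := hG.cut A hA hAS
    have h2 := hnd A hAS
    have h3 : bd (insert s(x,u) E) A ⊆ insert s(x,u) (bd E A) := by
      intro e he
      rw [Finset.mem_insert]
      rw [mem_bd] at he
      rcases Finset.mem_insert.1 he.1 with h | h
      · exact Or.inl h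
      · exact Or.inr (mem_bd.2 ⟨h, he.2⟩)
    have h4 := (Finset.card_le_card h3).trans (Finset.card_insert_le _ _)
    omega
  · intro A B hA hB hd hcov
    obtain ⟨a, ha, b, hb, hab⟩ := hG.conn A B hA hB hd hcov
    refine ⟨a, ha, b, hb, ?_⟩
    rcases Finset.mem_insert.1 hab with h | h
    · exfalso
      rcases Sym2.eq_iff.1 h with ⟨h, _⟩ | ⟨_, h⟩
      · exact (hcov a).2 (Or.inl ha) (h ▸ hx)
      · exact (hcov b).2 (Or.inr hb) (h ▸ hx)
    · exact h

def Res {V : Type} [Fintype V] [DecidableEq V] (S : Finset V) (E : Finset (Sym2 V)) : Prop :=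
  ∃ Q : ℝ[X], P S E = X ^ (Sᶜ.card + 1) * ((X - 1) * Q) ∧ Q.Monic ∧
    Q.natDegree + 1 + Sᶜ.card = E.card ∧ ∀ t : ℝ, t < 2 → 0 < (-1) ^ Q.natDegree * Q.eval t

theorem compl_card {V : Type} [Fintype V] [DecidableEq V] {S : Finset V} {u : V} (hu : u ∉ S) :
    Sᶜ.card = (insert u S)ᶜ.card + 1 := by
  rw [Finset.compl_insert, Finset.card_erase_add_one]
  simpa using hu

theorem Res.mul1 {V : Type} [Fintype V] [DecidableEq V] {S : Finset V} {E E' : Finset (Sym2 V)}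
    {u : V} (hu : u ∉ S) (h : Res (insert u S) E') (hP : P S E = X * P (insert u S) E')
    (hE : E.card = E'.card + 1) : Res S E := by
  obtain ⟨Q, h1, h2, h3, h4⟩ := h
  have := compl_card hu
  refine ⟨Q, ?_, h2, by omega, h4⟩
  rw [hP, h1, this]; ring

theorem Res.mul2 {V : Type} [Fintype V] [DecidableEq V] {S : Finset V} {E E' : Finset (Sym2 V)}
    {u : V} (hu : u ∉ S) (h : Res (insert u S) E')
    (hP : P S E = X * ((X - 2) * P (insert u S) E'))
    (hE : E.card = E'.card + 2) : Res S E := by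
  obtain ⟨Q, h1, h2, h3, h4⟩ := h
  have := compl_card hu
  have hm : ((X : ℝ[X]) - C 2).Monic := monic_X_sub_C 2
  have hd : ((X - C 2) * Q).natDegree = Q.natDegree + 1 := by
    rw [hm.natDegree_mul h2, natDegree_X_sub_C]; ring
  refine ⟨(X - C 2) * Q, ?_, hm.mul h2, by omega, ?_⟩
  · rw [hP, h1, this, show (C 2 : ℝ[X]) = 2 from rfl]; ring
  · intro t ht
    rw [hd]
    have := mul_pos (h4 t ht) (sub_pos.2 ht)
    simp only [eval_mul, eval_sub, eval_X, eval_C]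
    calc _ < _ := this
      _ = _ := by ring

theorem Res.sub {V : Type} [Fintype V] [DecidableEq V] {S : Finset V} {E E' : Finset (Sym2 V)}
    {u : V} (hu : u ∉ S) (h : Res (insert u S) E') (h' : P S E' = 0 ∨ Res S E')
    (hP : P S E = X * P (insert u S) E' - P S E')
    (hE : E.card = E'.card + 1) : Res S E := by
  rcases h' with h' | h'
  · exact Res.mul1 hu h (by rw [hP, h', sub_zero]) hE
  obtain ⟨Q, h1, h2, h3, h4⟩ := h
  obtain ⟨R, r1, r2, r3, r4⟩ := h'
  have := compl_card hu
  have hlt : R.degree < Q.degree := by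
    rw [degree_eq_natDegree r2.ne_zero, degree_eq_natDegree h2.ne_zero]
    exact_mod_cast (by omega)
  have hd : (Q - R).natDegree = R.natDegree + 1 := by
    rw [natDegree_sub_eq_left_of_natDegree_lt (by omega)]; omega
  refine ⟨Q - R, ?_, h2.sub_of_left hlt, by omega, ?_⟩
  · rw [hP, h1, r1, this]; ring
  · intro t ht
    rw [hd]
    have a := h4 t ht
    rw [show Q.natDegree = R.natDegree + 1 by omega] at a
    have b := r4 t ht
    rw [eval_sub]
    calc _ < _ := add_pos a b
      _ = _ := by ring

open Classical in
theorem P_two {V : Type} [Finite V] (S : Finset V) (E : Finset (Sym2 V)) {x u y : V}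
    (hx : x ∈ S) (hu : u ∉ S) (hyu : y ≠ u) (hE : ∀ e ∈ E, u ∉ e) (hne : x ≠ y) :
    P S (insert s(u,x) (insert s(u,y) E)) = X * P (insert u S) (insert s(u,y) E) := by
  have hxu : x ≠ u := by rintro rfl; exact hu hx
  have hn : s(x,u) ∉ insert s(u,y) E := by
    rw [Finset.mem_insert, not_or]
    refine ⟨?_, fun h => hE _ h (by simp)⟩
    intro h
    rcases Sym2.eq_iff.1 h with h | h
    · exact hxu h.1
    · exact hne h.1
  rw [Sym2.eq_swap (a := u) (b := x), P_contract S _ hx hn, P_dead S (insert s(u,y) E) {u}, sub_zero]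
  · rintro a rfl; exact hu
  · rw [Finset.card_eq_one]
    refine ⟨s(u,y), ?_⟩
    ext e
    rw [mem_bd, Finset.mem_singleton]
    constructor
    · rintro ⟨h, a, ha, b, hb, rfl⟩
      rcases Finset.mem_insert.1 h with h | h
      · exact h
      · exact absurd (by simp [Set.mem_singleton_iff.1 ha]) (hE _ h)
    · rintro rfl
      exact ⟨by simp, u, rfl, y, hyu, rfl⟩

open Classical in
theorem P_three {V : Type} [Finite V] (S : Finset V) (E : Finset (Sym2 V)) {x x' u y : V}
    (hx : x ∈ S) (hx' : x' ∈ S) (hu : u ∉ S) (hyu : y ≠ u) (hE : ∀ e ∈ E, u ∉ e)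
    (hne : x ≠ y) (hne' : x' ≠ y) (hxx : x ≠ x') :
    P S (insert s(u,x) (insert s(u,x') (insert s(u,y) E))) =
      X * ((X - 2) * P (insert u S) (insert s(u,y) E)) := by
  have hxu : x ≠ u := by rintro rfl; exact hu hx
  have hxu' : x' ≠ u := by rintro rfl; exact hu hx'
  have hn : s(x,u) ∉ insert s(u,x') (insert s(u,y) E) := by
    simp only [Finset.mem_insert, not_or]
    refine ⟨?_, ?_, fun h => hE _ h (by simp)⟩
    · intro h
      rcases Sym2.eq_iff.1 h with h | h
      · exact hxu h.1
      · exact hxx h.1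
    · intro h
      rcases Sym2.eq_iff.1 h with h | h
      · exact hxu h.1
      · exact hne h.1
  have hn' : s(u,x') ∉ insert s(u,y) E := by
    simp only [Finset.mem_insert, not_or]
    refine ⟨?_, fun h => hE _ h (by simp)⟩
    intro h
    rcases Sym2.eq_iff.1 h with h | h
    · exact hne' h.2
    · exact hxu' h.2
  rw [Sym2.eq_swap (a := u) (b := x), P_contract S _ hx hn, P_two S E hx' hu hyu hE hne',
    P_loop (insert u S) _ (by simp) (by simp [hx']) hn']
  ring

theorem main_res {V : Type} [Fintype V] [DecidableEq V] : ∀ k : ℕ, ∀ (S : Finset V)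
    (E : Finset (Sym2 V)), E.card = k → Good S E → Res S E := by
  intro k
  induction k using Nat.strong_induction_on with
  | _ k ih =>
  intro S E hk hG
  obtain ⟨u, x, hu, hx, hxu, hc⟩ := exists_good hG
  have hux : s(u,x) ∈ E := by rwa [Sym2.eq_swap]
  set E0 := E \ star E u with hE0
  have hE0u : ∀ e ∈ E0, u ∉ e := by
    intro e he h
    rw [hE0, Finset.mem_sdiff, mem_star] at he
    exact he.2 ⟨he.1, h⟩
  have hstarE : star E u ⊆ E := fun e he => (mem_star.1 he).1
  have hEun : E = star E u ∪ E0 := by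
    rw [hE0, Finset.union_sdiff_of_subset hstarE]
  have hform : ∀ e ∈ star E u, ∃ y, e = s(u,y) ∧ y ≠ u := by
    intro e he
    obtain ⟨h1, h2⟩ := mem_star.1 he
    obtain ⟨y, rfl⟩ := Sym2.mem_iff_exists.1 h2
    exact ⟨y, rfl, by rintro rfl; exact hG.loopless _ h1⟩
  have hcong : ∀ a b : V, s(u,a) ≠ s(u,b) → a ≠ b := by
    rintro a b h rfl; exact h rfl
  have hcong' : ∀ a b : V, s(u,a) = s(u,b) → a = b := by
    intro a b h
    rcases Sym2.eq_iff.1 h with h | ⟨h, h'⟩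
    · exact h.2
    · exact h'.trans h
  have hxstar : s(u,x) ∈ star E u := mem_star.2 ⟨hux, by simp⟩
  have h2 : 2 ≤ (star E u).card := by
    refine le_trans (hG.cut {u} ⟨u, rfl⟩ (by rintro a rfl; exact hu)) (Finset.card_le_card ?_)
    intro e he
    obtain ⟨heE, a, ha, b, hb, rfl⟩ := mem_bd.1 he
    rw [Set.mem_singleton_iff] at ha
    subst ha
    exact mem_star.2 ⟨heE, by simp⟩
  have h3 := hG.deg u hu
  have hnext : ∀ y, s(u,y) ∈ E → (∀ z, s(u,z) ∈ E → z = y ∨ z ∈ S) →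
      Res (insert u S) (insert s(u,y) E0) := by
    intro y hyE hz
    have hyE0 : s(u,y) ∉ E0 := fun h => hE0u _ h (by simp)
    by_cases hW : ∃ w, w ∉ S ∧ w ≠ u
    · have hy : y ∉ S := by
        intro hyS
        obtain ⟨w, hwS, hwu⟩ := hW
        obtain ⟨a, ha, b, hb, hab⟩ := hG.conn {u} {v | v ∉ S ∧ v ≠ u} ⟨u, rfl⟩ ⟨w, hwS, hwu⟩
          (by rintro v rfl h; exact h.2 rfl) (by
            intro v
            simp only [Set.mem_ofPred_eq, Set.mem_singleton_iff]
            by_cases hv : v = u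
            · subst hv; simp [hu]
            · simp [hv])
        rw [Set.mem_singleton_iff] at ha
        subst ha
        rcases hz b hab with h | h
        · subst h; exact hb.1 hyS
        · exact hb.1 h
      have hsub : insert s(u,y) E0 ⊆ E := by
        intro e he
        rcases Finset.mem_insert.1 he with rfl | h
        · exact hyE
        · rw [hEun]; exact Finset.mem_union_right _ h
      have hgood : Good (insert u S) (insert s(u,y) E0) := by
        have := Good.next (E' := insert s(u,y) E0) hG hc hW hsub ?_ ?_
        · convert this
        · intro e he he'
          rw [Finset.mem_insert, not_or] at he'
          have hes : e ∈ star E u := by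
            by_contra h; exact he'.2 (Finset.mem_sdiff.2 ⟨he, h⟩)
          obtain ⟨z, rfl, hzu⟩ := hform e hes
          rcases hz z he with h | h
          · subst h; exact absurd rfl he'.1
          · exact ⟨z, h, rfl⟩
        · intro z hz'
          rcases Finset.mem_insert.1 hz' with h | h
          · rw [hcong' _ _ h]; exact hy
          · exact absurd (by simp) (hE0u _ h)
      have hlt : (insert s(u,y) E0).card < k := by
        rw [Finset.card_insert_of_notMem hyE0, hE0]
        have := Finset.card_sdiff_add_card_eq_card hstarE
        omega
      exact ih _ hlt _ _ rfl hgood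
    · push Not at hW
      have hall : ∀ v, v ∈ insert u S := by
        intro v
        by_cases hv : v ∈ S
        · simp [hv]
        · simp [hW v hv]
      have hE0e : E0 = ∅ := by
        rw [Finset.eq_empty_iff_forall_notMem]
        intro e he
        have hu' := hE0u e he
        have heE : e ∈ E := (Finset.mem_sdiff.1 he).1
        induction e using Sym2.ind with | _ a b
        simp only [Sym2.mem_iff, not_or] at hu'
        have ha : a ∈ S := by by_contra h; exact hu'.1 (hW a h).symm
        have hb : b ∈ S := by by_contra h; exact hu'.2 (hW b h).symm
        exact hG.meets a b heE ha hb
      have hcz : (insert u S)ᶜ.card = 0 := by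
        rw [Finset.card_eq_zero, Finset.eq_empty_iff_forall_notMem]
        intro v hv
        exact Finset.mem_compl.1 hv (hall v)
      have : Nonempty V := ⟨u⟩
      have hl := P_loop (insert u S) ∅ (hall u) (hall y) (by simp)
      refine ⟨1, ?_, monic_one, ?_, ?_⟩
      · rw [hcz, hE0e]
        rw [P_base _ hall] at hl
        have : P (insert u S) (insert s(u,y) ∅) = (X - 1) * X := by convert hl
        rw [this]; ring
      · rw [hcz, hE0e]; simp
      · intro t ht; simp
  have hcases : (star E u).card = 2 ∨ (star E u).card = 3 := by omega
  rcases hcases with hcard | hcard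
  · skip
    obtain ⟨g, hg⟩ : ∃ g, (star E u).erase s(u,x) = {g} := by
      rw [← Finset.card_eq_one, Finset.card_erase_of_mem hxstar, hcard]
    have hst : star E u = {s(u,x), g} := by
      rw [← Finset.insert_erase hxstar, hg]
    have hgm : g ∈ (star E u).erase s(u,x) := by rw [hg]; simp
    obtain ⟨hgx, hgs⟩ := Finset.mem_erase.1 hgm
    obtain ⟨y, rfl, hyu⟩ := hform g hgs
    have hEE : E = insert s(u,x) (insert s(u,y) E0) := by
      rw [hst] at hEun
      rw [hEun]; ext e; simp
    have hR := hnext y (hstarE hgs) (by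
      intro z hz
      have : s(u,z) ∈ star E u := mem_star.2 ⟨hz, by simp⟩
      rw [hst, Finset.mem_insert, Finset.mem_singleton] at this
      rcases this with h | h
      · right; rw [hcong' _ _ h]; exact hx
      · left; exact hcong' _ _ h)
    have hni : s(u,x) ∉ insert s(u,y) E0 := by
      rw [Finset.mem_insert, not_or]
      exact ⟨hgx.symm, fun h => hE0u _ h (by simp)⟩
    refine Res.mul1 hu hR ?_ ?_
    · have := P_two S E0 hx hu hyu hE0u (hcong _ _ hgx.symm)
      rw [hEE]; convert this
    · rw [← Finset.card_insert_of_notMem hni, ← hEE]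
  · skip
    obtain ⟨f, g, hfg, hfgs⟩ : ∃ f g, f ≠ g ∧ (star E u).erase s(u,x) = {f, g} := by
      rw [← Finset.card_eq_two, Finset.card_erase_of_mem hxstar, hcard]
    have hst : star E u = {s(u,x), f, g} := by
      rw [← Finset.insert_erase hxstar, hfgs]
    have hgm : g ∈ (star E u).erase s(u,x) := by rw [hfgs]; simp
    have hfm : f ∈ (star E u).erase s(u,x) := by rw [hfgs]; simp
    obtain ⟨hgx, hgs⟩ := Finset.mem_erase.1 hgm
    obtain ⟨hfx, hfs⟩ := Finset.mem_erase.1 hfm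
    obtain ⟨y, rfl, hyu⟩ := hform g hgs
    obtain ⟨z, rfl, hzu⟩ := hform f hfs
    have hmem : ∀ v, s(u,v) ∈ E → v = x ∨ v = z ∨ v = y := by
      intro v hv
      have : s(u,v) ∈ star E u := mem_star.2 ⟨hv, by simp⟩
      rw [hst, Finset.mem_insert, Finset.mem_insert, Finset.mem_singleton] at this
      rcases this with h | h | h
      · exact Or.inl (hcong' _ _ h)
      · exact Or.inr (Or.inl (hcong' _ _ h))
      · exact Or.inr (Or.inr (hcong' _ _ h))
    have hcase : ∀ z y, y ≠ u → s(u,z) ≠ s(u,y) → s(u,y) ≠ s(u,x) → s(u,z) ≠ s(u,x) →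
        s(u,y) ∈ E → star E u = {s(u,x), s(u,z), s(u,y)} → z ∈ S →
        (∀ v, s(u,v) ∈ E → v = x ∨ v = z ∨ v = y) → Res S E := by
      intro z y hyu hzy hyx hzx hyE hst hz hmem
      have hEE : E = insert s(u,x) (insert s(u,z) (insert s(u,y) E0)) := by
        rw [hst] at hEun
        rw [hEun]; ext e; simp
      have hR := hnext y hyE (by
        intro v hv
        rcases hmem v hv with h | h | h
        · right; rw [h]; exact hx
        · right; rw [h]; exact hz
        · left; exact h)
      have hn1 : s(u,z) ∉ insert s(u,y) E0 := by
        rw [Finset.mem_insert, not_or]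
        exact ⟨hzy, fun h => hE0u _ h (by simp)⟩
      have hn2 : s(u,x) ∉ insert s(u,z) (insert s(u,y) E0) := by
        rw [Finset.mem_insert, not_or, Finset.mem_insert, not_or]
        exact ⟨hzx.symm, hyx.symm, fun h => hE0u _ h (by simp)⟩
      refine Res.mul2 hu hR ?_ ?_
      · have := P_three S E0 hx hz hu hyu hE0u (hcong _ _ hyx.symm) (hcong _ _ hzy)
          (hcong _ _ hzx.symm)
        rw [hEE]; convert this
      · have e1 := Finset.card_insert_of_notMem hn1
        have e2 := Finset.card_insert_of_notMem hn2
        rw [← hEE] at e2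
        omega
    by_cases hzS : z ∈ S
    · exact hcase z y hyu hfg hgx hfx (hstarE hgs) hst hzS hmem
    by_cases hyS : y ∈ S
    · refine hcase y z hzu hfg.symm hfx hgx (hstarE hfs) ?_ hyS ?_
      · rw [hst]; congr 1; exact Finset.pair_comm _ _
      · intro v hv
        have := hmem v hv
        tauto
    have hEx : E = insert s(x,u) (E.erase s(x,u)) := (Finset.insert_erase hxu).symm
    have hcd : E.card = (E.erase s(x,u)).card + 1 := (Finset.card_erase_add_one hxu).symm
    have hgood1 : Good (insert u S) (E.erase s(x,u)) := by
      have := Good.next (E' := E.erase s(x,u)) hG hc ⟨y, hyS, hyu⟩ (Finset.erase_subset _ _) ?_ ?_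
      · convert this
      · intro e he he'
        refine ⟨x, hx, ?_⟩
        by_contra h
        exact he' (Finset.mem_erase.2 ⟨by rwa [Sym2.eq_swap], he⟩)
      · intro v hv hvS
        obtain ⟨hv1, hv2⟩ := Finset.mem_erase.1 hv
        rcases hmem v hv2 with h | h | h
        · subst h; exact hv1 Sym2.eq_swap
        · exact hzS (h ▸ hvS)
        · exact hyS (h ▸ hvS)
    have hlt : (E.erase s(x,u)).card < k := by omega
    refine Res.sub hu (ih _ hlt _ _ rfl hgood1) ?_ ?_ hcd
    · by_cases hdead : ∃ A : Set V, (∀ a ∈ A, a ∉ S) ∧ (bd (E.erase s(x,u)) A).card = 1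
      · obtain ⟨A, hA, h1⟩ := hdead
        exact Or.inl (P_dead S _ A hA h1)
      · right
        push Not at hdead
        refine ih _ hlt _ _ rfl ?_
        refine Good.erase (u := u) hx ?_ hdead
        have hEx' := hEx
        convert hG
        convert hEx'.symm
    · have := P_contract S (E.erase s(x,u)) hx (Finset.notMem_erase _ _)
      have hEx' : P S E = P S (insert s(x,u) (E.erase s(x,u))) := by rw [← hEx]
      rw [hEx']
      convert this

theorem good_init {V : Type} [Fintype V] (G : SimpleGraph V)
    (hconn : G.Connected) (hb : ∀ e : Sym2 V, ¬ G.IsBridge e)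
    (hcubic : ∀ v : V, Nat.card (G.neighborSet v) = 3) :
    ∃ x : V, Good {x} G.edgeSet.toFinite.toFinset := by
  classical
  obtain ⟨x, hx⟩ := hconn.exists_preconnected_induce_compl_singleton_of_finite
  have hE : ∀ a b, s(a,b) ∈ G.edgeSet.toFinite.toFinset ↔ G.Adj a b := by
    intro a b; simp
  refine ⟨x, ?_, ?_, ?_, ?_, ?_, ?_⟩
  · intro a; rw [hE]; exact G.loopless.irrefl a
  · intro a b h ha hb
    rw [hE] at h
    simp only [Finset.mem_singleton] at ha hb
    subst ha; subst hb
    exact h.ne rfl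
  · intro u _
    have hsub : star G.edgeSet.toFinite.toFinset u ⊆
        (G.neighborSet u).toFinite.toFinset.image (fun y => s(u,y)) := by
      intro e he
      obtain ⟨h1, h2⟩ := mem_star.1 he
      obtain ⟨y, rfl⟩ := Sym2.mem_iff_exists.1 h2
      rw [hE] at h1
      exact Finset.mem_image.2 ⟨y, by simpa using h1, rfl⟩
    refine (Finset.card_le_card hsub).trans (Finset.card_image_le.trans ?_)
    rw [← hcubic u, Nat.card_coe_set_eq, Set.ncard_eq_toFinset_card _ (Set.toFinite _)]
  · intro A ⟨a0, ha0⟩ hAx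
    have hxA : x ∉ A := fun h => hAx x h (by simp)
    obtain ⟨p⟩ := hconn.preconnected a0 x
    obtain ⟨d, _, hd1, hd2⟩ := p.exists_boundary_dart A ha0 hxA
    have hnb := hb s(d.fst, d.snd)
    rw [SimpleGraph.isBridge_iff, not_not] at hnb
    obtain ⟨q⟩ := hnb
    obtain ⟨d', _, hd1', hd2'⟩ := q.exists_boundary_dart A hd1 hd2
    have hadj := d'.adj
    rw [SimpleGraph.deleteEdges_adj] at hadj
    have hne : s(d'.fst, d'.snd) ≠ s(d.fst, d.snd) := fun h => hadj.2 (by simp [h])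
    rw [← Finset.card_pair hne]
    apply Finset.card_le_card
    intro e he
    rw [Finset.mem_insert, Finset.mem_singleton] at he
    rw [mem_bd]
    rcases he with rfl | rfl
    · exact ⟨(hE _ _).2 hadj.1, _, hd1', _, hd2', rfl⟩
    · exact ⟨(hE _ _).2 d.adj, _, hd1, _, hd2, rfl⟩
  · intro A B ⟨a, ha⟩ ⟨b, hbB⟩ hd hcov
    have hax : a ∈ ({x}ᶜ : Set V) := by simpa using (hcov a).2 (Or.inl ha)
    have hbx : b ∈ ({x}ᶜ : Set V) := by simpa using (hcov b).2 (Or.inr hbB)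
    obtain ⟨p⟩ := hx ⟨a, hax⟩ ⟨b, hbx⟩
    obtain ⟨d, _, hd1, hd2⟩ := p.exists_boundary_dart {v | v.1 ∈ A} ha (fun h => hd _ h hbB)
    refine ⟨d.fst.1, hd1, d.snd.1, ?_, (hE _ _).2 d.adj⟩
    have h2 : d.snd.1 ≠ x := d.snd.2
    rcases (hcov d.snd.1).1 (by simpa using h2) with h | h
    · exact absurd h hd2
    · exact h
  · have : (G.neighborSet x).Nonempty := by
      rw [Set.nonempty_iff_ne_empty]
      intro h
      have := hcubic x
      rw [h] at this
      simp at this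
    obtain ⟨y, hy⟩ := this
    exact ⟨y, by simpa using (G.ne_of_adj hy).symm⟩

theorem flow_eq {V : Type} [Fintype V] (G : SimpleGraph V) (x : V) :
    P {x} G.edgeSet.toFinite.toFinset =
      X ^ (Fintype.card V) * (flowPoly G).map (Int.castRingHom ℝ) := by
  classical
  unfold P flowPoly
  rw [Polynomial.map_sum, Finset.mul_sum]
  apply Finset.sum_congr rfl
  intro Z hZ
  have hle := Finset.card_le_card (Finset.mem_powerset.1 hZ)
  have hg : SimpleGraph.fromEdgeSet (↑Z : Set (Sym2 V)) = hgr Z {x} := by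
    ext a b
    rw [hgr_adj, SimpleGraph.fromEdgeSet_adj]
    simp
    intro hne h h'
    exact absurd (h.trans h'.symm) hne
  have hbnd := cc_bound Z x
  rw [hg]
  change _ = X ^ _ * ((((-1 : ℤ) ^ _) • (X : ℤ[X]) ^ (Z.card + cc (hgr Z {x}) - Fintype.card V)).map _)
  obtain ⟨k, hk⟩ := Nat.exists_eq_add_of_le hbnd
  obtain ⟨l, hl⟩ := Nat.exists_eq_add_of_le hle
  rw [hk, hl, Nat.add_sub_cancel_left, Nat.add_sub_cancel_left]
  have : (-1 : ℝ[X]) ^ (Z.card + l + Z.card) = (-1) ^ l := by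
    rw [show Z.card + l + Z.card = l + 2 * Z.card by ring, pow_add, pow_mul]; simp
  rw [this, zsmul_eq_mul, Polynomial.map_mul]
  simp
  ring

theorem edge_card {V : Type} [Fintype V] (G : SimpleGraph V)
    (hcubic : ∀ v : V, Nat.card (G.neighborSet v) = 3) :
    3 * Fintype.card V = 2 * G.edgeSet.toFinite.toFinset.card := by
  classical
  have h := G.sum_degrees_eq_twice_card_edges
  have h1 : ∀ v, G.degree v = 3 := by
    intro v
    rw [← hcubic v, Nat.card_eq_fintype_card, SimpleGraph.card_neighborSet_eq_degree]
  have h2 : G.edgeSet.toFinite.toFinset = G.edgeFinset := by ext; simp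
  rw [h2, ← h]
  simp [h1, mul_comm]

end FlowAux

/-- For a connected bridgeless simple cubic graph with only real flow roots, the flow
polynomial has degree `n/2 + 1`, `1` is a root of multiplicity exactly `1`, and every
other (real) root is at least `2`. -/
theorem stmt_9 {V : Type} [Fintype V] (G : SimpleGraph V)
    (hconn : G.Connected) (hbridgeless : ∀ e : Sym2 V, ¬ G.IsBridge e)
    (hcubic : ∀ v : V, Nat.card (G.neighborSet v) = 3)
    (hreal : ∀ z : ℂ, ((flowPoly G).map (Int.castRingHom ℂ)).IsRoot z → z.im = 0)
    (n : ℕ) (hn : n = Fintype.card V)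
    (p : Polynomial ℝ) (hp : p = (flowPoly G).map (Int.castRingHom ℝ)) :
    p.natDegree = n / 2 + 1 ∧ Polynomial.rootMultiplicity 1 p = 1 ∧
      ∀ x : ℝ, p.IsRoot x → x ≠ 1 → 2 ≤ x := by
  classical
  obtain ⟨x, hG⟩ := FlowAux.good_init G hconn hbridgeless hcubic
  obtain ⟨Q, h1, h2, h3, h4⟩ := FlowAux.main_res _ {x} _ rfl hG
  have hEc := FlowAux.edge_card G hcubic
  have hpos : 0 < Fintype.card V := Fintype.card_pos_iff.2 ⟨x⟩
  have hcc : ({x} : Finset V)ᶜ.card + 1 = Fintype.card V := by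
    rw [Finset.card_compl, Finset.card_singleton]; omega
  rw [FlowAux.flow_eq, hcc, ← hp] at h1
  have hpQ : p = (X - C 1) * Q := by
    have := mul_left_cancel₀ (pow_ne_zero _ X_ne_zero) h1
    simpa using this
  have hm : ((X : ℝ[X]) - C 1).Monic := monic_X_sub_C 1
  have hQ : ∀ t : ℝ, t < 2 → ¬ Q.IsRoot t := by
    intro t ht h
    have := h4 t ht
    rw [h.eq_zero, mul_zero] at this
    exact lt_irrefl _ this
  refine ⟨?_, ?_, ?_⟩
  · rw [hpQ, hm.natDegree_mul h2, natDegree_X_sub_C]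
    omega
  · rw [hpQ, rootMultiplicity_mul (mul_ne_zero hm.ne_zero h2.ne_zero),
      rootMultiplicity_X_sub_C_self, rootMultiplicity_eq_zero (hQ 1 (by norm_num))]
  · intro t ht hne
    by_contra hlt
    push Not at hlt
    rw [hpQ, IsRoot.def, eval_mul, mul_eq_zero] at ht
    rcases ht with h | h
    · simp [sub_eq_zero] at h
      exact hne h
    · exact hQ t hlt h
end

section
/- For every natural number s ≥ 0 and every i with 0 ≤ i ≤ s+3, the coefficient of t^i in the polynomial (t+1)(t+2)^s(t+3)^3 is strictly greater than the coefficient of t^i in the polynomial (t+1)(t+2)^{s+1}(t+3)^2 (both polynomials have degree s+4 and equal leading coefficient 1). -/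
open Polynomial

/-- Multiplying by `X + a` with `a > 0` preserves positivity and raises the degree bound. -/
theorem pos_step (p : Polynomial ℤ) (n : ℕ) (a : ℤ) (ha : 0 < a)
    (h : ∀ i, 0 ≤ p.coeff i ∧ (i ≤ n → 0 < p.coeff i)) :
    ∀ i, 0 ≤ (p * (X + C a)).coeff i ∧ (i ≤ n + 1 → 0 < (p * (X + C a)).coeff i) := by
  intro i
  rw [mul_add, coeff_add, coeff_mul_C]
  cases i with
  | zero =>
    have h0 := (h 0).2 (Nat.zero_le _)
    rw [coeff_mul_X_zero]
    have := mul_pos h0 ha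
    exact ⟨by linarith, fun _ => by linarith⟩
  | succ k =>
    rw [coeff_mul_X]
    have h1 := mul_nonneg (h (k + 1)).1 ha.le
    have h2 := (h k).1
    refine ⟨by linarith, fun hk => ?_⟩
    have h3 := (h k).2 (by omega)
    linarith

theorem pos_pow (s : ℕ) :
    ∀ i, 0 ≤ ((X + C 2) ^ s : Polynomial ℤ).coeff i ∧
      (i ≤ s → 0 < ((X + C 2) ^ s : Polynomial ℤ).coeff i) := by
  induction s with
  | zero =>
    intro i
    rw [pow_zero, coeff_one]
    refine ⟨by split_ifs <;> norm_num, fun hi => ?_⟩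
    have : i = 0 := by omega
    simp [this]
  | succ k ih =>
    rw [pow_succ]
    exact pos_step _ _ 2 (by norm_num) ih

/-- Each coefficient (below the leading one) of `(t+1)(t+2)^s(t+3)^3` strictly exceeds
the corresponding coefficient of `(t+1)(t+2)^{s+1}(t+3)^2`. -/
theorem stmt_14 (s : ℕ) :
    ∀ i ≤ s + 3,
      ((X + 1) * (X + 2) ^ (s + 1) * (X + 3) ^ 2 : Polynomial ℤ).coeff i <
        ((X + 1) * (X + 2) ^ s * (X + 3) ^ 3 : Polynomial ℤ).coeff i := by
  intro i hi
  have h := (pos_step _ _ 3 (by norm_num) (pos_step _ _ 3 (by norm_num)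
    (pos_step _ _ 1 (by norm_num) (pos_pow s))) i).2 hi
  have e : ((X + 1) * (X + 2) ^ s * (X + 3) ^ 3 : Polynomial ℤ) =
      (X + 1) * (X + 2) ^ (s + 1) * (X + 3) ^ 2 +
        (X + C 2) ^ s * (X + C 1) * (X + C 3) * (X + C 3) := by
    have h1 : (C 1 : Polynomial ℤ) = 1 := rfl
    have h2 : (C 2 : Polynomial ℤ) = 2 := rfl
    have h3 : (C 3 : Polynomial ℤ) = 3 := rfl
    rw [h1, h2, h3]
    ring
  rw [e, coeff_add]
  linarith
end

section
/- For every natural number s ≥ 0 and every i with 0 ≤ i ≤ s+5, the coefficient of t^i in the rational polynomial (t+1)(t+2)^s(t+5/2)^4 is greater than or equal to the coefficient of t^i in the polynomial (t+1)(t+2)^{s+2}(t+3)^2. -/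
open Polynomial

/-- Each coefficient of `(t+1)(t+2)^{s+2}(t+3)^2` is at most the corresponding
coefficient of `(t+1)(t+2)^s(t+5/2)^4`. -/
theorem stmt_15 (s : ℕ) :
    ∀ i ≤ s + 5,
      ((X + 1) * (X + 2) ^ (s + 2) * (X + 3) ^ 2 : Polynomial ℚ).coeff i ≤
        ((X + 1) * (X + 2) ^ s * (X + C (5 / 2 : ℚ)) ^ 4 : Polynomial ℚ).coeff i := by
  intro i _
  have h1 : (C (5 / 2 : ℚ)) * 2 = 5 := by
    rw [← C_ofNat, ← C_ofNat, ← C_mul]; norm_num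
  have h2 : (C (5 / 2 : ℚ)) ^ 2 = 6 + C (1 / 4 : ℚ) := by
    rw [← C_ofNat, ← C_pow, ← C_add]; norm_num
  have h3 : (X + C (5 / 2 : ℚ)) ^ 2 = (X + 2) * (X + 3) + C (1 / 4 : ℚ) := by
    linear_combination X * h1 + h2
  have h4 : ((X + 1) * (X + 2) ^ s * (X + C (5 / 2 : ℚ)) ^ 4 : Polynomial ℚ) =
      (X + 1) * (X + 2) ^ (s + 2) * (X + 3) ^ 2 +
      (X + 1) * (X + 2) ^ s * (2 * C (1 / 4 : ℚ) * ((X + 2) * (X + 3)) + C (1 / 4 : ℚ) ^ 2) := by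
    rw [show (X + C (5 / 2 : ℚ)) ^ 4 = ((X + C (5 / 2 : ℚ)) ^ 2) ^ 2 by ring, h3]
    ring
  have h5 : ((X + 1) * (X + 2) ^ s *
      (2 * C (1 / 4 : ℚ) * ((X + 2) * (X + 3)) + C (1 / 4 : ℚ) ^ 2) : Polynomial ℚ) =
      ((X + 1) * (X + 2) ^ s *
      (2 * C (1 / 4 : ℚ≥0) * ((X + 2) * (X + 3)) + C (1 / 4 : ℚ≥0) ^ 2) :
        Polynomial ℚ≥0).map (algebraMap ℚ≥0 ℚ) := by
    simp
  rw [h4, h5, coeff_add, coeff_map]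
  exact le_add_of_nonneg_right (NNRat.cast_nonneg _)
end

section
/- Let G be a connected bridgeless finite simple graph with n vertices and m = n+1 edges. Then its flow polynomial satisfies F(G,t) = (t−1)^2 or F(G,t) = (t−1)(t−2). -/
open Polynomial

theorem dec0 : ∀ T : Finset (ZMod 2 × ZMod 2), 0 ∉ T →
   Nat.card {p : ZMod 2 × ZMod 2 // ∀ q ∈ T, p.1 * q.1 + p.2 * q.2 = 0}
    = 2 ^ (2 - T.card) := by
  have : ∀ T : Finset (ZMod 2 × ZMod 2), 0 ∉ T →
   Fintype.card {p : ZMod 2 × ZMod 2 // ∀ q ∈ T, p.1 * q.1 + p.2 * q.2 = 0}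
    = 2 ^ (2 - T.card) := by decide
  intro T hT
  rw [Nat.card_eq_fintype_card]
  convert this T hT

section lin
open Classical

/-- incidence matrix mod 2 restricted to Z -/
noncomputable def incZ {V : Type} [Fintype V] (Z : Finset (Sym2 V)) : Matrix V Z (ZMod 2) :=
  fun v e => if v ∈ (e : Sym2 V) then 1 else 0

/-- mod 2 cycle space on edge set Z -/
noncomputable def cyc {V : Type} [Fintype V] (Z : Finset (Sym2 V)) :
    Submodule (ZMod 2) (Sym2 V → ZMod 2) where
  carrier := {x | (∀ e ∉ Z, x e = 0) ∧ ∀ v : V, ∑ e, (if v ∈ e then x e else 0) = 0}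
  zero_mem' := by simp
  add_mem' := by
    rintro x y ⟨hx, hx'⟩ ⟨hy, hy'⟩
    refine ⟨fun e he => by simp [hx e he, hy e he], fun v => ?_⟩
    have := congrArg₂ (· + ·) (hx' v) (hy' v)
    simp only [← Finset.sum_add_distrib, add_zero] at this
    refine (Finset.sum_congr rfl fun e _ => ?_).trans this
    split_ifs <;> simp
  smul_mem' := by
    rintro c x ⟨hx, hx'⟩
    refine ⟨fun e he => by simp [hx e he], fun v => ?_⟩
    have := congrArg (c * ·) (hx' v)
    simp only [Finset.mul_sum, mul_zero] at this
    refine (Finset.sum_congr rfl fun e _ => ?_).trans this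
    split_ifs <;> simp

theorem mem_cyc {V : Type} [Fintype V] (Z : Finset (Sym2 V)) (x : Sym2 V → ZMod 2) :
    x ∈ cyc Z ↔ (∀ e ∉ Z, x e = 0) ∧ ∀ v : V, ∑ e, (if v ∈ e then x e else 0) = 0 := Iff.rfl

theorem ker_inc {V : Type} [Fintype V] (Z : Finset (Sym2 V)) (hZ : ∀ e ∈ Z, ¬ e.IsDiag) :
    Module.finrank (ZMod 2) (LinearMap.ker (incZ Z).transpose.mulVecLin)
      = Nat.card (SimpleGraph.fromEdgeSet (↑Z : Set (Sym2 V))).ConnectedComponent := by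
  set H := SimpleGraph.fromEdgeSet (↑Z : Set (Sym2 V)) with hH
  have key : ∀ f : V → ZMod 2, f ∈ LinearMap.ker (incZ Z).transpose.mulVecLin ↔
      ∀ u v, H.Adj u v → f u = f v := by
    intro f
    have h2 : ∀ u v : V, u ≠ v →
        (∑ w, (if w ∈ s(u, v) then (1 : ZMod 2) else 0) * f w = 0 ↔ f u = f v) := by
      intro u v huv
      have : ∑ w, (if w ∈ s(u, v) then (1 : ZMod 2) else 0) * f w = f u + f v := by
        rw [← Finset.sum_pair huv]
        rw [← Finset.sum_subset (Finset.subset_univ ({u, v} : Finset V))]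
        · refine Finset.sum_congr rfl fun w hw => ?_
          have : w = u ∨ w = v := by simpa using hw
          simp [this]
        · intro w _ hw
          have : ¬ (w = u ∨ w = v) := by simpa using hw
          simp [this]
      rw [this]
      generalize f u = a
      generalize f v = b
      revert a b
      decide
    rw [LinearMap.mem_ker, funext_iff]
    constructor
    · intro h u v huv
      rw [hH, SimpleGraph.fromEdgeSet_adj] at huv
      have := h ⟨s(u, v), huv.1⟩
      exact (h2 u v huv.2).1 this
    · rintro h ⟨e, he⟩
      induction e with
      | h u v =>
        have hne : u ≠ v := fun h' => hZ _ he (by simp [h'])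
        exact (h2 u v hne).2 (h u v (by rw [hH, SimpleGraph.fromEdgeSet_adj]; exact ⟨he, hne⟩))
  let L : (H.ConnectedComponent → ZMod 2) →ₗ[ZMod 2] (V → ZMod 2) :=
    LinearMap.funLeft _ _ H.connectedComponentMk
  have hL : Function.Injective L :=
    LinearMap.funLeft_injective_of_surjective _ _ _ Quot.mk_surjective
  have hr : LinearMap.range L = LinearMap.ker (incZ Z).transpose.mulVecLin := by
    ext f
    rw [key, LinearMap.mem_range]
    constructor
    · rintro ⟨g, rfl⟩ u v huv
      simp only [L, LinearMap.funLeft_apply]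
      rw [SimpleGraph.ConnectedComponent.eq.2 huv.reachable]
    · intro h
      refine ⟨fun c => Quot.lift f (fun u v huv => ?_) c, rfl⟩
      obtain ⟨p⟩ := huv
      induction p with
      | nil => rfl
      | cons h' _ ih => exact (h _ _ h').trans ih
  have : Fintype H.ConnectedComponent := Fintype.ofFinite _
  rw [← hr, LinearMap.finrank_range_of_inj hL, Module.finrank_fintype_fun_eq_card,
    Nat.card_eq_fintype_card]

theorem finrank_cyc {V : Type} [Fintype V] (Z : Finset (Sym2 V)) (hZ : ∀ e ∈ Z, ¬ e.IsDiag) :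
    Module.finrank (ZMod 2) (cyc Z) + Fintype.card V = Z.card +
      Nat.card (SimpleGraph.fromEdgeSet (↑Z : Set (Sym2 V))).ConnectedComponent := by
  have h1 := LinearMap.finrank_range_add_finrank_ker (incZ Z).transpose.mulVecLin
  have h2 := LinearMap.finrank_range_add_finrank_ker (incZ Z).mulVecLin
  have h3 := Matrix.rank_transpose (incZ Z)
  rw [Matrix.rank, Matrix.rank] at h3
  rw [ker_inc Z hZ] at h1
  simp only [Module.finrank_fintype_fun_eq_card, Fintype.card_coe] at h1 h2
  let L : (Z → ZMod 2) →ₗ[ZMod 2] (Sym2 V → ZMod 2) :=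
    Function.ExtendByZero.linearMap _ (Subtype.val : Z → Sym2 V)
  have hLi : ∀ x (e : Z), L x e = x e := fun x e =>
    Subtype.val_injective.extend_apply x 0 e
  have hLo : ∀ x, ∀ e ∉ Z, L x e = 0 := fun x e he =>
    Function.extend_apply' (f := (Subtype.val : Z → Sym2 V)) x (0 : Sym2 V → ZMod 2) e (by rintro ⟨a, rfl⟩; exact he a.2)
  have hL : Function.Injective L := by
    intro x y h
    ext e
    rw [← hLi x, ← hLi y, h]
  have hs : ∀ (y : Sym2 V → ZMod 2) (v : V), (∀ e ∉ Z, y e = 0) →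
      ∑ e, (if v ∈ e then y e else 0) = (incZ Z).mulVec (fun e => y e) v := by
    intro y v hy
    rw [← Finset.sum_subset (Finset.subset_univ Z)]
    · rw [← Finset.sum_coe_sort]
      refine Finset.sum_congr rfl fun e _ => ?_
      simp [incZ]
    · intro e _ he
      simp [hy e he]
  have hm : (LinearMap.ker (incZ Z).mulVecLin).map L = cyc Z := by
    ext y
    rw [Submodule.mem_map, mem_cyc]
    constructor
    · rintro ⟨x, hx, rfl⟩
      refine ⟨hLo x, fun v => ?_⟩
      rw [hs _ _ (hLo x)]
      simp only [hLi]
      exact congrFun hx v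
    · rintro ⟨h, h'⟩
      refine ⟨fun e => y e, ?_, ?_⟩
      · rw [LinearMap.mem_ker]
        ext v
        rw [Matrix.mulVecLin_apply, ← hs y v h, h']; rfl
      · ext e
        by_cases he : e ∈ Z
        · exact hLi _ ⟨e, he⟩
        · rw [hLo _ e he, h e he]
  have := (Submodule.equivMapOfInjective L hL (LinearMap.ker (incZ Z).mulVecLin)).finrank_eq
  rw [hm] at this
  omega

theorem poly_sum {α β : Type} [DecidableEq β] (E : Finset α) (c : α → β) (hE : E.Nonempty) :
    ∑ A ∈ E.powerset, (-1 : ℤ) ^ A.card • (X : ℤ[X]) ^ (2 - (A.image c).card)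
      = (X - 1) * (X + 1 - ((E.image c).card : ℤ[X])) := by
  have hz : ∀ s : Finset α, s.Nonempty → ∑ A ∈ s.powerset, (-1 : ℤ) ^ A.card = 0 :=
    fun s hs => Finset.sum_powerset_neg_one_pow_card_of_nonempty hs
  have hA : ∀ A ∈ E.powerset, (-1 : ℤ) ^ A.card • (X : ℤ[X]) ^ (2 - (A.image c).card)
     = (-1 : ℤ) ^ A.card • (1 : ℤ[X]) +
       ∑ p ∈ E.image c, (if A ∈ (E.filter (c · = p)).powerset then
          (-1 : ℤ) ^ A.card • (X - 1 : ℤ[X]) else 0)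
       + (if A = ∅ then (X - 1) * (X + 1 - ((E.image c).card : ℤ[X])) else 0) := by
    intro A hAE
    rw [Finset.mem_powerset] at hAE
    by_cases h0 : A = ∅
    · subst h0
      simp
      ring
    · obtain ⟨a, ha⟩ := Finset.nonempty_iff_ne_empty.2 h0
      by_cases h1 : (A.image c).card = 1
      · obtain ⟨q, hq⟩ := Finset.card_eq_one.1 h1
        have hq' : ∀ x ∈ A, c x = q := fun x hx => by
          have := Finset.mem_image_of_mem c hx
          rwa [hq, Finset.mem_singleton] at this
        rw [Finset.sum_eq_single q]
        · have : A ∈ (E.filter (c · = q)).powerset := by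
            rw [Finset.mem_powerset]
            intro x hx
            exact Finset.mem_filter.2 ⟨hAE hx, hq' x hx⟩
          rw [if_pos this, h1, if_neg h0, ← smul_add]
          simp
        · intro p _ hp
          rw [if_neg]
          intro h
          have := (Finset.mem_filter.1 (Finset.mem_powerset.1 h ha)).2
          exact hp (this.symm.trans (hq' a ha))
        · intro h
          exact absurd (hq' a ha ▸ Finset.mem_image_of_mem c (hAE ha)) h
      · have h2 : 2 ≤ (A.image c).card := by
          have : 0 < (A.image c).card := Finset.card_pos.2 ⟨_, Finset.mem_image_of_mem c ha⟩
          omega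
        rw [Finset.sum_eq_zero, if_neg h0, Nat.sub_eq_zero_of_le h2]
        · simp
        · intro p _
          rw [if_neg]
          intro h
          apply h1
          rw [Finset.card_eq_one]
          refine ⟨p, ?_⟩
          ext q
          rw [Finset.mem_image, Finset.mem_singleton]
          have h3 : ∀ x ∈ A, c x = p := fun x hx =>
            (Finset.mem_filter.1 (Finset.mem_powerset.1 h hx)).2
          constructor
          · rintro ⟨x, hx, rfl⟩
            exact h3 x hx
          · rintro rfl
            exact ⟨a, ha, h3 a ha⟩
  rw [Finset.sum_congr rfl hA, Finset.sum_add_distrib, Finset.sum_add_distrib, ← Finset.sum_smul,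
    hz E hE, Finset.sum_comm, Finset.sum_eq_zero]
  · simp
  · intro p hp
    rw [← Finset.sum_filter, Finset.filter_mem_eq_inter, Finset.inter_eq_right.2
      (Finset.powerset_mono.2 (Finset.filter_subset _ _)), ← Finset.sum_smul, hz, zero_smul]
    obtain ⟨x, hx, rfl⟩ := Finset.mem_image.1 hp
    exact ⟨x, Finset.mem_filter.2 ⟨hx, rfl⟩⟩

theorem stmt_16_aux {V : Type} [Fintype V] (G : SimpleGraph V)
    (hconn : G.Connected) (hbridgeless : ∀ e : Sym2 V, ¬ G.IsBridge e)
    (hm : edgeCount G = Fintype.card V + 1) :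
    flowPoly G = (X - 1) ^ 2 ∨ flowPoly G = (X - 1) * (X - 2) := by
  unfold edgeCount at hm
  unfold flowPoly
  set E := G.edgeSet.toFinite.toFinset with hEdef
  have hEG : (↑E : Set (Sym2 V)) = G.edgeSet := by simp [hEdef]
  have hmemE : ∀ e, e ∈ E ↔ e ∈ G.edgeSet := by simp [hEdef]
  have hdiag : ∀ Z ⊆ E, ∀ e ∈ Z, ¬ e.IsDiag := fun Z hZ e he =>
    G.not_isDiag_of_mem_edgeSet ((hmemE e).1 (hZ he))
  have hc1 : ∀ H : SimpleGraph V, H.Connected → Nat.card H.ConnectedComponent = 1 := by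
    intro H hH
    rw [Nat.card_eq_one_iff_unique]
    have := hH.preconnected.subsingleton_connectedComponent
    have := hH.nonempty
    exact ⟨inferInstance, inferInstance⟩
  have hrE : Module.finrank (ZMod 2) (cyc E) = 2 := by
    have := finrank_cyc E (hdiag E subset_rfl)
    rw [hEG, SimpleGraph.fromEdgeSet_edgeSet, hc1 G hconn] at this
    omega
  have hre : ∀ e ∈ E, Module.finrank (ZMod 2) (cyc (E.erase e)) = 1 := by
    intro e he
    have := finrank_cyc (E.erase e) (hdiag _ (Finset.erase_subset _ _))
    rw [Finset.card_erase_of_mem he, hc1] at this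
    · have := Finset.card_pos.2 ⟨e, he⟩
      omega
    · have h : (G.deleteEdges {e}).Connected := by
        induction e with
        | h u v => exact hconn.connected_delete_edge_of_not_isBridge (hbridgeless _)
      rw [Finset.coe_erase, hEG]
      rwa [← SimpleGraph.edgeSet_deleteEdges, SimpleGraph.fromEdgeSet_edgeSet]
  have hr0 : Module.finrank (ZMod 2) (cyc (∅ : Finset (Sym2 V))) = 0 := by
    rw [Submodule.finrank_eq_zero]
    rw [eq_bot_iff]
    intro x hx
    ext e
    exact hx.1 e (by simp)
  obtain ⟨φ⟩ : Nonempty ((ZMod 2 × ZMod 2) ≃ₗ[ZMod 2] cyc E) :=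
    FiniteDimensional.nonempty_linearEquiv_of_finrank_eq (by simp [hrE])
  let c : Sym2 V → ZMod 2 × ZMod 2 := fun e => ((φ (1, 0)).1 e, (φ (0, 1)).1 e)
  have hφ : ∀ p e, (φ p).1 e = p.1 * (c e).1 + p.2 * (c e).2 := by
    intro p e
    have : p = p.1 • ((1, 0) : ZMod 2 × ZMod 2) + p.2 • ((0, 1) : ZMod 2 × ZMod 2) := by
      ext <;> simp
    conv_lhs => rw [this, map_add, map_smul, map_smul]
    rfl
  have hcard : ∀ A ⊆ E, Nat.card {p : ZMod 2 × ZMod 2 //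
      ∀ q ∈ A.image c, p.1 * q.1 + p.2 * q.2 = 0} =
        2 ^ Module.finrank (ZMod 2) (cyc (E \ A)) := by
    intro A hA
    have h1 : Nat.card (cyc (E \ A)) = 2 ^ Module.finrank (ZMod 2) (cyc (E \ A)) := by
      rw [Nat.card_eq_fintype_card, Module.card_eq_pow_finrank (K := ZMod 2), ZMod.card]
    rw [← h1]
    refine Nat.card_congr (Equiv.ofBijective (fun p => ⟨(φ p.1).1, ?_⟩) ⟨?_, ?_⟩)
    · refine ⟨fun e he => ?_, (φ p.1).2.2⟩
      by_cases heE : e ∈ E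
      · have heA : e ∈ A := by
          by_contra h
          exact he (Finset.mem_sdiff.2 ⟨heE, h⟩)
        rw [hφ]
        exact p.2 _ (Finset.mem_image_of_mem c heA)
      · exact (φ p.1).2.1 e heE
    · intro p q h
      have : (φ p.1).1 = (φ q.1).1 := Subtype.mk.inj h
      exact Subtype.ext (φ.injective (Subtype.ext this))
    · rintro ⟨x, hx⟩
      have hxE : x ∈ cyc E := ⟨fun e he => hx.1 e (fun h => he (Finset.mem_sdiff.1 h).1), hx.2⟩
      obtain ⟨p, hp⟩ := φ.surjective ⟨x, hxE⟩
      refine ⟨⟨p, fun q hq => ?_⟩, Subtype.ext ?_⟩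
      · obtain ⟨e, he, rfl⟩ := Finset.mem_image.1 hq
        rw [← hφ, hp]
        exact hx.1 e (fun h => (Finset.mem_sdiff.1 h).2 he)
      · change (φ p).1 = x
        rw [hp]
  have hne : ∀ e ∈ E, c e ≠ 0 := by
    intro e he h0
    have := hcard {e} (by simpa using he)
    rw [Finset.sdiff_singleton_eq_erase, hre e he] at this
    simp [h0] at this
  have h0n : ∀ A ⊆ E, (0 : ZMod 2 × ZMod 2) ∉ A.image c := by
    intro A hA h
    obtain ⟨e, he, h⟩ := Finset.mem_image.1 h
    exact hne e (hA he) h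
  have hN : ∀ A ⊆ E, Module.finrank (ZMod 2) (cyc (E \ A)) = 2 - (A.image c).card := by
    intro A hA
    have h1 := hcard A hA
    rw [dec0 _ (h0n A hA)] at h1
    exact (Nat.pow_right_injective le_rfl h1).symm
  have hk2 : 2 ≤ (E.image c).card := by
    have := hN E subset_rfl
    rw [Finset.sdiff_self, hr0] at this
    omega
  have hk3 : (E.image c).card ≤ 3 := by
    have h1 : E.image c ⊆ Finset.univ.erase 0 := by
      intro q hq
      rw [Finset.mem_erase]
      exact ⟨fun h => h0n E subset_rfl (h ▸ hq), Finset.mem_univ _⟩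
    have h2 := Finset.card_le_card h1
    rw [Finset.card_erase_of_mem (Finset.mem_univ _)] at h2
    simpa using h2
  have hEne : E.Nonempty := Finset.card_pos.1 (by omega)
  have hsum := poly_sum E c hEne
  have heq : ∑ Z ∈ E.powerset, (-1 : ℤ) ^ (E.card - Z.card) •
      (X : Polynomial ℤ) ^
        (Z.card + Nat.card (SimpleGraph.fromEdgeSet (↑Z : Set (Sym2 V))).ConnectedComponent
          - Fintype.card V) = 
      ∑ A ∈ E.powerset, (-1 : ℤ) ^ A.card • (X : ℤ[X]) ^ (2 - (A.image c).card) := by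
    refine Finset.sum_bij' (fun Z _ => E \ Z) (fun A _ => E \ A) ?_ ?_ ?_ ?_ ?_
    · intro Z _; simp
    · intro Z _; simp
    · intro Z hZ; simpa using Finset.mem_powerset.1 hZ
    · intro Z hZ; simpa using Finset.mem_powerset.1 hZ
    · intro Z hZ
      have hZ := Finset.mem_powerset.1 hZ
      rw [← hN _ Finset.sdiff_subset, Finset.sdiff_sdiff_eq_self hZ,
        Finset.card_sdiff_of_subset hZ, ← finrank_cyc Z (hdiag Z hZ), Nat.add_sub_cancel]
  rw [heq, hsum]
  rcases (by omega : (E.image c).card = 2 ∨ (E.image c).card = 3) with h | h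
  · left
    rw [h]
    push_cast
    ring
  · right
    rw [h]
    push_cast
    ring

end lin

/-- A connected bridgeless simple graph with `m = n + 1` has flow polynomial
`(t−1)²` or `(t−1)(t−2)`. -/
theorem stmt_16 {V : Type} [Fintype V] (G : SimpleGraph V)
    (hconn : G.Connected) (hbridgeless : ∀ e : Sym2 V, ¬ G.IsBridge e)
    (hm : edgeCount G = Fintype.card V + 1) :
    flowPoly G = (X - 1) ^ 2 ∨ flowPoly G = (X - 1) * (X - 2) :=
  stmt_16_aux G hconn hbridgeless hm
end
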